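/- Let x̄ ∈ ℝ, σ > 0 and t > 0, and let P_t : ℝ → ℝ be defined by P_t(x) = t·sgn(x) if |x| > t and P_t(x) = x if |x| ≤ t. Set a₁ = (t + x̄)/(√2·σ) and a₂ = (t − x̄)/(√2·σ). Then (1/(√(2π)·σ)) ∫_{−∞}^{∞} P_t(x)² · exp(−(x − x̄)²/(2σ²)) dx = (√(2/π)·σ·x̄ − (σ²/√π)·a₁)·exp(−a₁²) − (√(2/π)·σ·x̄ + (σ²/√π)·a₂)·exp(−a₂²) + (1/2)(σ² + x̄² − t²)·(erf(a₁) + erf(a₂)) + t², where erf(z) = (2/√π) ∫₀^z exp(−u²) du. -/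

import Mathlib

open MeasureTheory

/-- The error function `erf(z) = (2/√π) ∫₀^z exp(−u²) du`. -/
noncomputable def erf (z : ℝ) : ℝ :=
  (2 / Real.sqrt Real.pi) * ∫ u in (0:ℝ)..z, Real.exp (-u ^ 2)

/-- The clipping function `P_t(x) = t·sgn(x)` if `|x| > t`, `P_t(x) = x` if `|x| ≤ t`. -/
noncomputable def clip (t x : ℝ) : ℝ := if |x| ≤ t then x else t * Real.sign x

/-! Up to an additive constant `t²`, the squared clipping function is `x² - t²` on `[-t, t]` and
zero elsewhere, so its Gaussian mean reduces to moments of order `0` and `2` over `[-t, t]`. The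
moment of order `0` is a difference of two error functions, and the moment of order `2` reduces to
it because the density `φ` with mean `μ` and variance `v` satisfies
`(-v (x + μ) φ x)' = (x² - (μ² + v)) φ x`. -/

open ProbabilityTheory
open scoped NNReal

section Erf

lemma erf_neg (z : ℝ) : erf (-z) = -erf z := by
  have reflect := intervalIntegral.integral_comp_neg (a := 0) (b := z) fun u ↦ Real.exp (-u ^ 2)
  simp only [neg_sq, neg_zero] at reflect
  rw [erf, erf, reflect, intervalIntegral.integral_symm, mul_neg]

lemma integral_exp_neg_sq_eq_erf_sub_erf (a b : ℝ) :
    ∫ u in a..b, Real.exp (-u ^ 2) = √Real.pi / 2 * (erf b - erf a) := by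
  have integrable (c : ℝ) : IntervalIntegrable (fun u ↦ Real.exp (-u ^ 2)) volume 0 c :=
    Continuous.intervalIntegrable (by fun_prop) _ _
  rw [← intervalIntegral.integral_interval_sub_left (integrable b) (integrable a), erf, erf]
  field_simp

end Erf

section Clip

variable {t : ℝ}

lemma clip_sq_of_lt_abs (ht : 0 ≤ t) {x : ℝ} (hx : t < |x|) : clip t x ^ 2 = t ^ 2 := by
  have x_ne_zero : x ≠ 0 := abs_pos.mp (ht.trans_lt hx)
  rw [clip, if_neg hx.not_ge]
  rcases Real.sign_apply_eq_of_ne_zero x x_ne_zero with sign_x | sign_x <;> simp [sign_x]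

lemma clip_sq_eq_add_indicator (ht : 0 ≤ t) (x : ℝ) :
    clip t x ^ 2 = t ^ 2 + (Set.Icc (-t) t).indicator (fun y ↦ y ^ 2 - t ^ 2) x := by
  by_cases hx : x ∈ Set.Icc (-t) t
  · rw [Set.indicator_of_mem hx, clip, if_pos (abs_le.mpr hx), add_sub_cancel]
  · have lt_abs_x : t < |x| := not_le.mp (mt abs_le.mp hx)
    rw [Set.indicator_of_notMem hx, clip_sq_of_lt_abs ht lt_abs_x, add_zero]

lemma integral_clip_sq_mul {ν : Measure ℝ} {f : ℝ → ℝ} (ht : 0 ≤ t) (hf : Integrable f ν) :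
    ∫ x, clip t x ^ 2 * f x ∂ν =
      t ^ 2 * (∫ x, f x ∂ν) + ∫ x in Set.Icc (-t) t, (x ^ 2 - t ^ 2) * f x ∂ν := by
  have integrableOn : IntegrableOn (fun x ↦ (x ^ 2 - t ^ 2) * f x) (Set.Icc (-t) t) ν :=
    hf.integrableOn.continuousOn_mul (by fun_prop) isCompact_Icc
  rw [← integral_const_mul, ← integral_indicator measurableSet_Icc,
    ← integral_add (hf.const_mul _) (integrableOn.integrable_indicator measurableSet_Icc)]
  simp only [clip_sq_eq_add_indicator ht, add_mul, Set.indicator_mul_left]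

end Clip

section Gaussian

variable (μ : ℝ)

lemma continuous_gaussianPDFReal (v : ℝ≥0) : Continuous (gaussianPDFReal μ v) := by
  rw [gaussianPDFReal_def]
  fun_prop

lemma hasDerivAt_gaussianPDFReal (v : ℝ≥0) (x : ℝ) :
    HasDerivAt (gaussianPDFReal μ v) (-(x - μ) / v * gaussianPDFReal μ v x) x := by
  have exponent : HasDerivAt (fun y ↦ -(y - μ) ^ 2 / (2 * v)) (-(x - μ) / v) x := by
    refine ((((hasDerivAt_id x).sub_const μ).pow 2).neg.div_const (2 * (v : ℝ))).congr_deriv ?_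
    simp only [id]
    ring
  refine (exponent.exp.const_mul (√(2 * Real.pi * v))⁻¹).congr_deriv ?_
  rw [gaussianPDFReal]
  ring

lemma gaussianPDFReal_eq_exp_neg_sq (v : ℝ≥0) (x : ℝ) :
    gaussianPDFReal μ v x =
      (√(2 * Real.pi * v))⁻¹ * Real.exp (-((x - μ) / √(2 * v)) ^ 2) := by
  rw [gaussianPDFReal, div_pow, Real.sq_sqrt (by positivity), neg_div]

variable {v : ℝ≥0}

lemma intervalIntegral_gaussianPDFReal_eq_erf_sub_erf (hv : v ≠ 0) (a b : ℝ) :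
    ∫ x in a..b, gaussianPDFReal μ v x =
      (erf ((b - μ) / √(2 * v)) - erf ((a - μ) / √(2 * v))) / 2 := by
  have sqrt_ne_zero : √(2 * v : ℝ) ≠ 0 := by positivity
  have sqrt_two_pi_mul : √(2 * Real.pi * v) = √(2 * v) * √Real.pi := by
    rw [← Real.sqrt_mul (by positivity), mul_right_comm]
  simp only [gaussianPDFReal_eq_exp_neg_sq, intervalIntegral.integral_const_mul]
  rw [intervalIntegral.integral_comp_sub_right (fun y ↦ Real.exp (-(y / √(2 * v)) ^ 2)),
    intervalIntegral.integral_comp_div (fun u ↦ Real.exp (-u ^ 2)) sqrt_ne_zero,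
    integral_exp_neg_sq_eq_erf_sub_erf, smul_eq_mul, sqrt_two_pi_mul]
  field_simp

lemma hasDerivAt_neg_mul_add_mul_gaussianPDFReal (hv : v ≠ 0) (x : ℝ) :
    HasDerivAt (fun y ↦ -v * ((y + μ) * gaussianPDFReal μ v y))
      ((x ^ 2 - (μ ^ 2 + v)) * gaussianPDFReal μ v x) x := by
  have product := ((hasDerivAt_id x).add_const μ).mul (hasDerivAt_gaussianPDFReal μ v x)
  refine (product.const_mul (-(v : ℝ))).congr_deriv ?_
  simp only [id]
  field_simp
  ring

lemma intervalIntegral_sq_mul_gaussianPDFReal (hv : v ≠ 0) (a b : ℝ) :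
    ∫ x in a..b, x ^ 2 * gaussianPDFReal μ v x =
      (μ ^ 2 + v) * (∫ x in a..b, gaussianPDFReal μ v x) -
        v * ((b + μ) * gaussianPDFReal μ v b - (a + μ) * gaussianPDFReal μ v a) := by
  have continuous_pdf := continuous_gaussianPDFReal μ v
  have ftc := intervalIntegral.integral_eq_sub_of_hasDerivAt (a := a) (b := b)
    (fun x _ ↦ hasDerivAt_neg_mul_add_mul_gaussianPDFReal μ hv x)
    (Continuous.intervalIntegrable (by fun_prop) _ _)
  simp only [sub_mul] at ftc
  rw [intervalIntegral.integral_sub (Continuous.intervalIntegrable (by fun_prop) _ _)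
    (Continuous.intervalIntegrable (by fun_prop) _ _), intervalIntegral.integral_const_mul] at ftc
  linear_combination ftc

lemma integral_clip_sq_mul_gaussianPDFReal (hv : v ≠ 0) {t : ℝ} (ht : 0 ≤ t) :
    ∫ x, clip t x ^ 2 * gaussianPDFReal μ v x =
      t ^ 2 + (v + μ ^ 2 - t ^ 2) * (∫ x in (-t)..t, gaussianPDFReal μ v x) -
        v * ((t + μ) * gaussianPDFReal μ v t + (t - μ) * gaussianPDFReal μ v (-t)) := by
  have continuous_pdf := continuous_gaussianPDFReal μ v
  have integral_Icc : ∫ x in Set.Icc (-t) t, (x ^ 2 - t ^ 2) * gaussianPDFReal μ v x =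
      (∫ x in (-t)..t, x ^ 2 * gaussianPDFReal μ v x) -
        t ^ 2 * ∫ x in (-t)..t, gaussianPDFReal μ v x := by
    rw [integral_Icc_eq_integral_Ioc, ← intervalIntegral.integral_of_le (by linarith),
      ← intervalIntegral.integral_const_mul,
      ← intervalIntegral.integral_sub (Continuous.intervalIntegrable (by fun_prop) _ _)
        (Continuous.intervalIntegrable (by fun_prop) _ _)]
    simp only [sub_mul]
  rw [integral_clip_sq_mul ht (integrable_gaussianPDFReal μ v),
    integral_gaussianPDFReal_eq_one μ hv, integral_Icc,
    intervalIntegral_sq_mul_gaussianPDFReal μ hv]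
  ring

end Gaussian

/-- The coefficients of the boundary terms at `-t` and `t` are the cases `m = x̄` and `m = -x̄`. -/
lemma sqrt_two_div_pi_mul_sub_div_sqrt_pi_mul {σ : ℝ} (hσ : σ ≠ 0) (m t : ℝ) :
    √(2 / Real.pi) * σ * m - σ ^ 2 / √Real.pi * ((t + m) / (√2 * σ)) =
      -(σ ^ 2 * ((t - m) * (√(2 * Real.pi) * σ)⁻¹)) := by
  have sqrt_two_sq : √2 ^ 2 = (2 : ℝ) := Real.sq_sqrt zero_le_two
  rw [Real.sqrt_div zero_le_two, Real.sqrt_mul zero_le_two]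
  field_simp
  linear_combination m * sqrt_two_sq

/-- the Gaussian mean of `P_t(x)²`, with `a₁ = (t + x̄)/(√2σ)`
and `a₂ = (t − x̄)/(√2σ)`. -/
theorem gaussian_mean_clip_sq (xbar σ t : ℝ) (hσ : 0 < σ) (ht : 0 < t)
    (a₁ a₂ : ℝ) (ha₁ : a₁ = (t + xbar) / (Real.sqrt 2 * σ))
    (ha₂ : a₂ = (t - xbar) / (Real.sqrt 2 * σ)) :
    (1 / (Real.sqrt (2 * Real.pi) * σ)) *
        ∫ x : ℝ, clip t x ^ 2 * Real.exp (-(x - xbar) ^ 2 / (2 * σ ^ 2)) =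
      (Real.sqrt (2 / Real.pi) * σ * xbar - (σ ^ 2 / Real.sqrt Real.pi) * a₁) *
          Real.exp (-a₁ ^ 2) -
        (Real.sqrt (2 / Real.pi) * σ * xbar + (σ ^ 2 / Real.sqrt Real.pi) * a₂) *
          Real.exp (-a₂ ^ 2) +
        (1 / 2) * (σ ^ 2 + xbar ^ 2 - t ^ 2) * (erf a₁ + erf a₂) + t ^ 2 := by
  let v : ℝ≥0 := .mk (σ ^ 2) (sq_nonneg σ)
  have hv : v ≠ 0 := NNReal.coe_ne_zero.mp (pow_ne_zero 2 hσ.ne')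
  have coe_v : (v : ℝ) = σ ^ 2 := rfl
  have sqrt_mul_sq (c : ℝ) : √(c * σ ^ 2) = √c * σ := by
    rw [Real.sqrt_mul' c (sq_nonneg σ), Real.sqrt_sq hσ.le]
  have mean : 1 / (√(2 * Real.pi) * σ) *
        (∫ x : ℝ, clip t x ^ 2 * Real.exp (-(x - xbar) ^ 2 / (2 * σ ^ 2))) =
      ∫ x, clip t x ^ 2 * gaussianPDFReal xbar v x := by
    simp only [gaussianPDFReal, coe_v, sqrt_mul_sq, one_div, ← integral_const_mul, mul_left_comm]
  have lower_endpoint : (-t - xbar) / (√2 * σ) = -a₁ := by rw [ha₁]; ring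
  have coeff₁ := sqrt_two_div_pi_mul_sub_div_sqrt_pi_mul hσ.ne' xbar t
  have coeff₂ := sqrt_two_div_pi_mul_sub_div_sqrt_pi_mul hσ.ne' (-xbar) t
  rw [← ha₁] at coeff₁
  rw [← sub_eq_add_neg, ← ha₂] at coeff₂
  rw [mean, integral_clip_sq_mul_gaussianPDFReal xbar hv ht.le,
    intervalIntegral_gaussianPDFReal_eq_erf_sub_erf xbar hv]
  simp only [gaussianPDFReal_eq_exp_neg_sq, coe_v, sqrt_mul_sq, lower_endpoint, ← ha₂, erf_neg,
    neg_sq]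
  linear_combination -Real.exp (-a₁ ^ 2) * coeff₁ - Real.exp (-a₂ ^ 2) * coeff₂
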